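/- There exists a constant C > 0 such that for all real x ≥ 1, all real y with 1 ≤ y ≤ x, every real z ≥ 2, and all integers q ≥ 1 and r with gcd(r, q) = 1, the number of integers n with x < n ≤ x + y, n ≡ r (mod q), and whose smallest prime factor exceeds z is at most C·( y/(φ(q)·log z) + z² ). -/

import Mathlib

open Finset ArithmeticFunction ArithmeticFunction.Moebius

namespace BTR

/-- The totient of `q` over `q` controls reciprocals of factored numbers. -/
lemma sum_factored_le (m : ℕ) (hm : m ≠ 0) (T : Finset ℕ)
    (hT : ∀ k ∈ T, k ∈ Nat.factoredNumbers m.primeFactors) :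
    ∑ k ∈ T, (1 / (k : ℝ)) ≤ (m : ℝ) / (Nat.totient m : ℝ) := by
  let f : ℕ →* ℝ :=
    { toFun := fun n => 1 / (n : ℝ)
      map_one' := by simp
      map_mul' := by intro a b; push_cast; rw [one_div_mul_one_div] }
  have hf : ∀ {p : ℕ}, p.Prime → ‖f p‖ < 1 := by
    intro p hp
    have h2 : (1 : ℝ) < p := by exact_mod_cast hp.one_lt
    change ‖1 / (p : ℝ)‖ < 1
    rw [Real.norm_of_nonneg (by positivity), div_lt_one (by linarith)]
    exact h2
  obtain ⟨-, h2⟩ :=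
    EulerProduct.summable_and_hasSum_factoredNumbers_prod_filter_prime_geometric hf m.primeFactors
  have h3 : ∑ k ∈ T.subtype (· ∈ Nat.factoredNumbers m.primeFactors), f k ≤
      ∏ p ∈ m.primeFactors with p.Prime, (1 - f p)⁻¹ := by
    refine sum_le_hasSum _ (fun k _ => ?_) h2
    change 0 ≤ 1 / ((k : ℕ) : ℝ)
    positivity
  rw [Finset.sum_subtype_of_mem (f := fun k => f k) hT] at h3
  refine h3.trans (le_of_eq ?_)
  have h4 : (m.primeFactors.filter Nat.Prime) = m.primeFactors :=
    Finset.filter_true_of_mem fun p hp => Nat.prime_of_mem_primeFactors hp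
  have h5 : (Nat.totient m : ℝ) = m * ∏ p ∈ m.primeFactors, (1 - f p) := by
    have := Nat.totient_eq_mul_prod_factors m
    have h := congrArg (fun t : ℚ => (t : ℝ)) this
    push_cast at h
    rw [h]
    simp [f]
  have hm' : (m : ℝ) ≠ 0 := by exact_mod_cast hm
  have h6 : (Nat.totient m : ℝ) ≠ 0 := by
    have := Nat.totient_pos.2 (Nat.pos_of_ne_zero hm)
    positivity
  rw [h4, Finset.prod_inv_distrib]
  rw [h5] at h6 ⊢
  have h7 := right_ne_zero_of_mul h6
  field_simp

/-- The sieving set. -/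
noncomputable def F (q N : ℕ) : Finset ℕ :=
  (Finset.Icc 1 N).filter fun e => Squarefree e ∧ Nat.Coprime e q

lemma mem_F {q N e : ℕ} : e ∈ F q N ↔ (1 ≤ e ∧ e ≤ N) ∧ Squarefree e ∧ Nat.Coprime e q := by
  simp [F]

lemma F_dvd {q N e d : ℕ} (he : e ∈ F q N) (hd : d ∣ e) : d ∈ F q N := by
  rw [mem_F] at he ⊢
  obtain ⟨⟨h1, h2⟩, h3, h4⟩ := he
  exact ⟨⟨Nat.pos_of_dvd_of_pos hd h1, (Nat.le_of_dvd h1 hd).trans h2⟩,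
    h3.squarefree_of_dvd hd, h4.coprime_dvd_left hd⟩

/-- The Selberg sum. -/
noncomputable def S (q N : ℕ) : ℝ := ∑ e ∈ F q N, 1 / (Nat.totient e : ℝ)

/-- Part of `n` away from `q`. -/
noncomputable def away (q n : ℕ) : ℕ := ∏ p ∈ n.primeFactors.filter (fun p => ¬ p ∣ q), p

lemma away_dvd (q n : ℕ) : away q n ∣ n :=
  (Finset.prod_dvd_prod_of_subset _ _ _ (Finset.filter_subset _ _)).trans
    (Nat.prod_primeFactors_dvd n)

lemma prime_dvd_away {q n p : ℕ} (hp : p.Prime) (hn : n ≠ 0) (hpn : p ∣ n) (hq : ¬ p ∣ q) :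
    p ∣ away q n :=
  Finset.dvd_prod_of_mem (fun p => p) (by simp [hp, hn, hpn, hq])

lemma away_mem {q N n : ℕ} (h1 : 1 ≤ n) (h2 : n ≤ N) : away q n ∈ F q N := by
  have hd := away_dvd q n
  rw [mem_F]
  refine ⟨⟨Nat.pos_of_dvd_of_pos hd h1, (Nat.le_of_dvd h1 hd).trans h2⟩, ?_, ?_⟩
  · have : away q n ∣ ∏ p ∈ n.primeFactors, p :=
      Finset.prod_dvd_prod_of_subset _ _ _ (Finset.filter_subset _ _)
    refine Squarefree.squarefree_of_dvd this ?_
    refine Finset.squarefree_prod_of_pairwise_isCoprime ?_ ?_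
    · intro a ha b hb hab
      exact Nat.coprime_iff_isRelPrime.1 ((Nat.coprime_primes (Nat.prime_of_mem_primeFactors ha)
        (Nat.prime_of_mem_primeFactors hb)).2 hab)
    · intro p hp
      exact (Nat.prime_of_mem_primeFactors hp).prime.squarefree
  · refine Nat.Coprime.prod_left fun p hp => ?_
    rw [Finset.mem_filter] at hp
    exact (Nat.prime_of_mem_primeFactors hp.1).coprime_iff_not_dvd.2 hp.2

lemma S_lower (q N : ℕ) (hq : 1 ≤ q) :
    ∑ n ∈ Finset.Icc 1 N, (1 / (n : ℝ)) ≤ (q : ℝ) / (Nat.totient q : ℝ) * S q N := by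
  have hmaps : ∀ n ∈ Finset.Icc 1 N, away q n ∈ F q N := by
    intro n hn
    rw [Finset.mem_Icc] at hn
    exact away_mem hn.1 hn.2
  rw [← Finset.sum_fiberwise_of_maps_to hmaps, S, Finset.mul_sum]
  refine Finset.sum_le_sum fun e he => ?_
  have he' := mem_F.1 he
  have he0 : e ≠ 0 := by have := he'.1.1; omega
  have heR : (e : ℝ) ≠ 0 := by exact_mod_cast he0
  set A := (Finset.Icc 1 N).filter (fun n => away q n = e) with hA
  have hAd : ∀ n ∈ A, e ∣ n := by
    intro n hn
    rw [hA, Finset.mem_filter] at hn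
    exact hn.2 ▸ away_dvd q n
  have hinj : Set.InjOn (fun n => n / e) (A : Set ℕ) := by
    intro a ha b hb hab
    have h1 := Nat.div_mul_cancel (hAd a ha)
    have h2 := Nat.div_mul_cancel (hAd b hb)
    simp only at hab
    rw [← h1, ← h2, hab]
  have h1 : ∑ n ∈ A, (1 / (n : ℝ)) = 1 / (e : ℝ) * ∑ k ∈ A.image (fun n => n / e), (1 / (k : ℝ)) := by
    rw [Finset.sum_image hinj, Finset.mul_sum]
    refine Finset.sum_congr rfl fun n hn => ?_
    rw [Nat.cast_div (hAd n hn) heR]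
    field_simp
  have h2 := sum_factored_le (q * e) (by positivity) (A.image (fun n => n / e)) (by
    intro k hk
    rw [Finset.mem_image] at hk
    obtain ⟨n, hn, rfl⟩ := hk
    have hd := hAd n hn
    rw [hA, Finset.mem_filter, Finset.mem_Icc] at hn
    rw [Nat.mem_factoredNumbers']
    intro p hp hpn
    have hpn' : p ∣ n := hpn.trans (Nat.div_dvd_of_dvd hd)
    rw [Nat.mem_primeFactors]
    refine ⟨hp, ?_, by positivity⟩
    by_cases hpq : p ∣ q
    · exact hpq.mul_right _
    · have := prime_dvd_away hp (by omega) hpn' hpq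
      rw [hn.2] at this
      exact this.mul_left _)
  have h3 : (q * e).totient = q.totient * e.totient := Nat.totient_mul he'.2.2.symm
  have hqt : (q.totient : ℝ) ≠ 0 := by
    have := Nat.totient_pos.2 hq
    positivity
  have het : (e.totient : ℝ) ≠ 0 := by
    have := Nat.totient_pos.2 (Nat.pos_of_ne_zero he0)
    positivity
  rw [h1]
  calc _ ≤ 1 / (e : ℝ) * (((q * e : ℕ) : ℝ) / ((q * e).totient : ℝ)) := by gcongr
    _ = _ := by
      rw [h3]; push_cast; field_simp

lemma log_le_S (q : ℕ) (hq : 1 ≤ q) (z : ℝ) (hz : 2 ≤ z) :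
    Real.log z ≤ (q : ℝ) / (Nat.totient q : ℝ) * S q ⌊z⌋₊ := by
  refine le_trans ?_ (S_lower q _ hq)
  have := log_le_harmonic_floor z (by linarith)
  rw [harmonic_eq_sum_Icc] at this
  push_cast at this
  simpa using this

/-- Selberg weights divided by `d`. -/
noncomputable def lamd (q N d : ℕ) : ℝ :=
  ∑ f ∈ (F q N).filter (fun f => d ∣ f), (μ (f / d) : ℝ) * ((μ f : ℝ) / (Nat.totient f * S q N))

lemma sum_moebius_eq {n : ℕ} : ∑ d ∈ n.divisors, (μ d : ℝ) = if n = 1 then 1 else 0 := by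
  have h := congrArg (fun g : ArithmeticFunction ℤ => g n) coe_zeta_mul_moebius
  simp only [coe_zeta_mul_apply] at h
  rw [one_apply] at h
  exact_mod_cast h

lemma moebius_inner {q N e f : ℕ} (hf : f ∈ F q N) (hef : e ∣ f) :
    ∑ d ∈ (F q N).filter (fun d => e ∣ d ∧ d ∣ f), (μ (f / d) : ℝ) = if f = e then 1 else 0 := by
  have hf' := mem_F.1 hf
  have hf0 : f ≠ 0 := by have := hf'.1.1; omega
  have he0 : e ≠ 0 := ne_zero_of_dvd_ne_zero hf0 hef
  have h : (if f = e then (1 : ℝ) else 0) = if f / e = 1 then 1 else 0 := by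
    congr 1
    rw [Nat.div_eq_iff_eq_mul_left (Nat.pos_of_ne_zero he0) hef, one_mul]
  rw [h, ← sum_moebius_eq]
  refine Finset.sum_bij' (fun d _ => f / d) (fun d _ => f / d) ?_ ?_ ?_ ?_ ?_
  · intro d hd
    simp only [Finset.mem_filter] at hd
    rw [Nat.mem_divisors]
    exact ⟨Nat.div_dvd_div_left hd.2.2 hd.2.1, (Nat.div_pos (Nat.le_of_dvd (by omega) hef) (by omega)).ne'⟩
  · intro d hd
    rw [Nat.mem_divisors] at hd
    have h1 : e * d ∣ f := (Nat.dvd_div_iff_mul_dvd hef).1 hd.1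
    have h2 : d ∣ f := (dvd_mul_left _ _).trans h1
    simp only [Finset.mem_filter]
    refine ⟨F_dvd hf (Nat.div_dvd_of_dvd h2), ?_, Nat.div_dvd_of_dvd h2⟩
    rw [Nat.dvd_div_iff_mul_dvd h2, mul_comm]
    exact h1
  · intro d hd
    simp only [Finset.mem_filter] at hd
    exact Nat.div_div_self hd.2.2 hf0
  · intro d hd
    rw [Nat.mem_divisors] at hd
    exact Nat.div_div_self (hd.1.trans (Nat.div_dvd_of_dvd hef)) hf0
  · intro d hd
    rfl

lemma dual {q N e : ℕ} (he : e ∈ F q N) :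
    ∑ d ∈ (F q N).filter (fun d => e ∣ d), lamd q N d = (μ e : ℝ) / (Nat.totient e * S q N) := by
  unfold lamd
  simp only [Finset.sum_filter]
  have h1 : ∀ d ∈ F q N, (if e ∣ d then ∑ f ∈ F q N, (if d ∣ f then (μ (f / d) : ℝ) * ((μ f : ℝ) / (Nat.totient f * S q N)) else 0) else 0)
      = ∑ f ∈ F q N, (if e ∣ d ∧ d ∣ f then (μ (f / d) : ℝ) else 0) * ((μ f : ℝ) / (Nat.totient f * S q N)) := by
    intro d _
    by_cases h : e ∣ d
    · simp [h, ite_mul]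
    · simp [h]
  rw [Finset.sum_congr rfl h1, Finset.sum_comm]
  simp_rw [← Finset.sum_mul, ← Finset.sum_filter]
  have h2 : ∀ f ∈ F q N, (∑ d ∈ (F q N).filter (fun d => e ∣ d ∧ d ∣ f), (μ (f / d) : ℝ)) * ((μ f : ℝ) / (Nat.totient f * S q N))
      = if f = e then ((μ f : ℝ) / (Nat.totient f * S q N)) else 0 := by
    intro f hf
    by_cases hef : e ∣ f
    · rw [moebius_inner hf hef]; simp
    · have : f ≠ e := by rintro rfl; exact hef dvd_rfl
      rw [if_neg this]
      rw [Finset.filter_false_of_mem]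
      · simp
      · rintro d _ ⟨a, b⟩
        exact hef (a.trans b)
  rw [Finset.sum_congr rfl h2, Finset.sum_ite_eq' , if_pos he]

lemma S_pos {q N : ℕ} (hN : 1 ≤ N) : 0 < S q N := by
  have h1 : 1 ∈ F q N := by rw [mem_F]; simp [hN]
  have : ∑ e ∈ {1}, 1 / (Nat.totient e : ℝ) ≤ S q N := by
    refine Finset.sum_le_sum_of_subset_of_nonneg (by simpa using h1) ?_
    intros; positivity
  simp at this
  linarith

lemma lam_one {q N : ℕ} (hN : 1 ≤ N) : lamd q N 1 = 1 := by
  have hS := S_pos (q := q) hN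
  unfold lamd
  have : ∀ f ∈ (F q N).filter (fun f => 1 ∣ f), (μ (f / 1) : ℝ) * ((μ f : ℝ) / (Nat.totient f * S q N)) = 1 / (Nat.totient f : ℝ) * (1 / S q N) := by
    intro f hf
    have hf' := mem_F.1 (Finset.mem_filter.1 hf).1
    have h := moebius_sq_eq_one_of_squarefree hf'.2.1
    have h' : (μ f : ℝ) ^ 2 = 1 := by exact_mod_cast h
    rw [Nat.div_one, ← mul_div_assoc, ← sq, h', one_div_mul_one_div]
  rw [Finset.sum_congr rfl this, ← Finset.sum_mul]
  simp only [one_dvd, Finset.filter_true]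
  change S q N * _ = 1
  field_simp

lemma sum_inv_totient {d : ℕ} (hd : Squarefree d) :
    ∑ k ∈ d.divisors, 1 / (Nat.totient k : ℝ) = d / (Nat.totient d : ℝ) := by
  have h0 : d ≠ 0 := hd.ne_zero
  have h1 : (d : ℝ) = ∑ k ∈ d.divisors, (Nat.totient (d / k) : ℝ) := by
    have h := Nat.sum_totient d
    rw [← Nat.sum_div_divisors d] at h
    exact_mod_cast h.symm
  rw [h1, Finset.sum_div]
  refine Finset.sum_congr rfl fun k hk => ?_
  have hkd := Nat.dvd_of_mem_divisors hk
  obtain ⟨m, rfl⟩ := hkd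
  have hk0 : k ≠ 0 := left_ne_zero_of_mul h0
  have hm0 : m ≠ 0 := right_ne_zero_of_mul h0
  have hc : Nat.Coprime k m := Nat.coprime_of_squarefree_mul hd
  rw [Nat.mul_div_cancel_left _ (Nat.pos_of_ne_zero hk0), Nat.totient_mul hc]
  have := Nat.totient_pos.2 (Nat.pos_of_ne_zero hk0)
  have := Nat.totient_pos.2 (Nat.pos_of_ne_zero hm0)
  push_cast
  field_simp

lemma key_le {q N d : ℕ} (hd : d ∈ F q N) :
    (d : ℝ) * ∑ f ∈ (F q N).filter (fun f => d ∣ f), 1 / (Nat.totient f : ℝ) ≤ S q N := by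
  have hd' := mem_F.1 hd
  have hd0 : d ≠ 0 := hd'.2.1.ne_zero
  have h1 : (d : ℝ) * ∑ f ∈ (F q N).filter (fun f => d ∣ f), 1 / (Nat.totient f : ℝ)
      = ∑ x ∈ ((F q N).filter (fun f => d ∣ f)) ×ˢ d.divisors,
        1 / (Nat.totient (x.2 * (x.1 / d)) : ℝ) := by
    rw [Finset.sum_product, Finset.mul_sum]
    refine Finset.sum_congr rfl fun f hf => ?_
    rw [Finset.mem_filter] at hf
    obtain ⟨hfF, m, rfl⟩ := hf
    have hsq := (mem_F.1 hfF).2.1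
    have hc : Nat.Coprime d m := Nat.coprime_of_squarefree_mul hsq
    simp only
    rw [Nat.mul_div_cancel_left _ (Nat.pos_of_ne_zero hd0), Nat.totient_mul hc]
    have : ∀ k ∈ d.divisors, 1 / (Nat.totient (k * m) : ℝ) = 1 / (Nat.totient k : ℝ) * (1 / (Nat.totient m : ℝ)) := by
      intro k hk
      rw [Nat.totient_mul (hc.coprime_dvd_left (Nat.dvd_of_mem_divisors hk))]
      push_cast
      rw [one_div_mul_one_div]
    rw [Finset.sum_congr rfl this, ← Finset.sum_mul, sum_inv_totient hd'.2.1]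
    push_cast
    rw [div_mul_div_comm, mul_one, mul_one_div]
  have hinj : Set.InjOn (fun x : ℕ × ℕ => x.2 * (x.1 / d))
      ((((F q N).filter (fun f => d ∣ f)) ×ˢ d.divisors : Finset (ℕ × ℕ)) : Set (ℕ × ℕ)) := by
    have hg : ∀ x ∈ ((F q N).filter (fun f => d ∣ f)) ×ˢ d.divisors,
        Nat.gcd (x.2 * (x.1 / d)) d = x.2 := by
      rintro ⟨f, k⟩ hx
      rw [Finset.mem_product, Finset.mem_filter] at hx
      obtain ⟨⟨hfF, m, hm⟩, hk⟩ := hx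
      simp only at hm hk hfF ⊢
      subst hm
      have hc : Nat.Coprime d m := Nat.coprime_of_squarefree_mul (mem_F.1 hfF).2.1
      rw [Nat.mul_div_cancel_left _ (Nat.pos_of_ne_zero hd0), Nat.Coprime.gcd_mul_right_cancel _ hc.symm]
      exact Nat.gcd_eq_left (Nat.dvd_of_mem_divisors hk)
    rintro ⟨f, k⟩ hx ⟨f', k'⟩ hx' h
    have e1 := hg _ hx
    have e2 := hg _ hx'
    simp only at h e1 e2
    have hkk : k = k' := by rw [← e1, ← e2, h]
    subst hkk
    simp only [Finset.coe_product, Set.mem_prod, Finset.mem_coe, Finset.mem_filter] at hx hx'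
    have hk0 : 0 < k := Nat.pos_of_mem_divisors hx.2
    have h3 := Nat.eq_of_mul_eq_mul_left hk0 h
    rw [← Nat.div_mul_cancel hx.1.2, ← Nat.div_mul_cancel hx'.1.2, h3]
  rw [h1, ← Finset.sum_image (f := fun n : ℕ => 1 / (Nat.totient n : ℝ)) hinj, S]
  refine Finset.sum_le_sum_of_subset_of_nonneg ?_ (by intros; positivity)
  intro n hn
  rw [Finset.mem_image] at hn
  obtain ⟨⟨f, k⟩, hx, rfl⟩ := hn
  rw [Finset.mem_product, Finset.mem_filter] at hx
  obtain ⟨⟨hfF, m, hm⟩, hk⟩ := hx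
  simp only at hm hk hfF ⊢
  subst hm
  rw [Nat.mul_div_cancel_left _ (Nat.pos_of_ne_zero hd0)]
  exact F_dvd hfF (Nat.mul_dvd_mul_right (Nat.dvd_of_mem_divisors hk) m)

lemma abs_moebius_le (n : ℕ) : |(μ n : ℝ)| ≤ 1 := by
  exact_mod_cast abs_moebius_le_one (n := n)

lemma lam_abs {q N d : ℕ} (hN : 1 ≤ N) (hd : d ∈ F q N) : |(d : ℝ) * lamd q N d| ≤ 1 := by
  have hS := S_pos (q := q) hN
  have h1 : |lamd q N d| ≤ (∑ f ∈ (F q N).filter (fun f => d ∣ f), 1 / (Nat.totient f : ℝ)) / S q N := by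
    unfold lamd
    refine (Finset.abs_sum_le_sum_abs _ _).trans ?_
    rw [Finset.sum_div]
    refine Finset.sum_le_sum fun f hf => ?_
    rw [abs_mul, abs_div, abs_of_nonneg (a := (Nat.totient f : ℝ) * S q N) (by positivity), div_div]
    have a1 := abs_moebius_le (f / d)
    have a2 := abs_moebius_le f
    calc _ ≤ 1 * (1 / ((Nat.totient f : ℝ) * S q N)) := by gcongr
      _ = _ := one_mul _
  have h2 := key_le hd
  rw [abs_mul, abs_of_nonneg (Nat.cast_nonneg d)]
  calc _ ≤ (d : ℝ) * ((∑ f ∈ (F q N).filter (fun f => d ∣ f), 1 / (Nat.totient f : ℝ)) / S q N) := by gcongr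
    _ ≤ 1 := by rw [← mul_div_assoc, div_le_one hS]; exact h2

lemma main_form {q N : ℕ} (hN : 1 ≤ N) :
    ∑ d ∈ F q N, ∑ d' ∈ F q N, lamd q N d * lamd q N d' * (Nat.gcd d d' : ℝ) = 1 / S q N := by
  have hS := S_pos (q := q) hN
  have h1 : ∀ d ∈ F q N, ∀ d' ∈ F q N, lamd q N d * lamd q N d' * (Nat.gcd d d' : ℝ)
      = ∑ e ∈ F q N, (Nat.totient e : ℝ) * ((if e ∣ d then lamd q N d else 0) * (if e ∣ d' then lamd q N d' else 0)) := by
    intro d hd d' hd'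
    have hd0 : d ≠ 0 := (mem_F.1 hd).2.1.ne_zero
    have h2 : (Nat.gcd d d' : ℝ) = ∑ e ∈ F q N, if e ∣ d ∧ e ∣ d' then (Nat.totient e : ℝ) else 0 := by
      have h := Nat.sum_totient (Nat.gcd d d')
      rw [← Finset.sum_filter]
      have h3 : (F q N).filter (fun e => e ∣ d ∧ e ∣ d') = (Nat.gcd d d').divisors := by
        ext e
        rw [Finset.mem_filter, Nat.mem_divisors, Nat.dvd_gcd_iff]
        refine ⟨fun h => ⟨h.2, (Nat.gcd_pos_of_pos_left _ (Nat.pos_of_ne_zero hd0)).ne'⟩,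
          fun h => ⟨F_dvd hd h.1.1, h.1⟩⟩
      rw [h3]
      exact_mod_cast h.symm
    rw [h2, Finset.mul_sum]
    refine Finset.sum_congr rfl fun e _ => ?_
    by_cases a : e ∣ d <;> by_cases b : e ∣ d' <;> simp [a, b]
    ring
  rw [Finset.sum_congr rfl fun d hd => Finset.sum_congr rfl (h1 d hd)]
  rw [Finset.sum_congr rfl fun d _ => Finset.sum_comm, Finset.sum_comm]
  have h4 : ∀ e ∈ F q N, ∑ d ∈ F q N, ∑ d' ∈ F q N, (Nat.totient e : ℝ) * ((if e ∣ d then lamd q N d else 0) * (if e ∣ d' then lamd q N d' else 0)) = 1 / (Nat.totient e : ℝ) * (1 / S q N) ^ 2 := by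
    intro e he
    have he' := mem_F.1 he
    have h : (μ e : ℝ) ^ 2 = 1 := by exact_mod_cast moebius_sq_eq_one_of_squarefree he'.2.1
    simp_rw [← Finset.mul_sum]
    rw [← Finset.sum_mul, ← Finset.sum_filter, dual he]
    have := Nat.totient_pos.2 he'.1.1
    have h5 : (Nat.totient e : ℝ) ≠ 0 := by positivity
    field_simp
    rw [h]
  rw [Finset.sum_congr rfl h4, ← Finset.sum_mul]
  change S q N * _ = _
  field_simp

lemma count_bound (a b : ℤ) (hab : a ≤ b) (q L : ℕ) (hq : 1 ≤ q) (hL : 1 ≤ L)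
    (hc : Nat.Coprime L q) (r : ℤ) :
    |(((((Finset.Ioc a b).filter (fun n => n ≡ r [ZMOD q])).filter (fun n => (L : ℤ) ∣ n)).card : ℝ))
      - ((b - a : ℤ) : ℝ) / (q * L)| ≤ 1 := by
  obtain ⟨u, w, huw⟩ : IsCoprime (L : ℤ) (q : ℤ) := Nat.isCoprime_iff_coprime.2 hc
  have h1 : ((Finset.Ioc a b).filter (fun n => n ≡ r [ZMOD q])).filter (fun n => (L : ℤ) ∣ n)
      = (Finset.Ioc a b).filter (fun n => n ≡ u * L * r [ZMOD ((q * L : ℕ) : ℤ)]) := by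
    rw [Finset.filter_filter]
    refine Finset.filter_congr fun n _ => ?_
    push_cast
    rw [← Int.modEq_and_modEq_iff_modEq_mul (by simpa using hc.symm)]
    have e1 : u * L * r ≡ r [ZMOD q] := by
      rw [Int.modEq_iff_dvd]
      exact ⟨w * r, by linear_combination (-r) * huw⟩
    have e2 : u * L * r ≡ 0 [ZMOD L] := by
      rw [Int.modEq_zero_iff_dvd]
      exact ⟨u * r, by ring⟩
    constructor
    · rintro ⟨h1, h2⟩
      exact ⟨h1.trans e1.symm, (Int.modEq_zero_iff_dvd.2 h2).trans e2.symm⟩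
    · rintro ⟨h1, h2⟩
      exact ⟨h1.trans e1, Int.modEq_zero_iff_dvd.1 (h2.trans e2)⟩
  rw [h1]
  have hM : (0 : ℤ) < ((q * L : ℕ) : ℤ) := by positivity
  have hMq : (0 : ℚ) < (((q * L : ℕ) : ℤ) : ℚ) := by exact_mod_cast hM
  have h2 := Int.Ioc_filter_modEq_card a b hM (u * L * r)
  set v := u * L * r
  set c := ((Finset.Ioc a b).filter (fun n => n ≡ v [ZMOD ((q * L : ℕ) : ℤ)])).card
  have hle : (a - v : ℚ) / (((q * L : ℕ) : ℤ) : ℚ) ≤ (b - v : ℚ) / (((q * L : ℕ) : ℤ) : ℚ) := by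
    have : (a : ℚ) ≤ b := by exact_mod_cast hab
    gcongr
  have hfl := Int.floor_le_floor hle
  rw [max_eq_left (by linarith)] at h2
  have h3 : |(c : ℚ) - ((b - a : ℤ) : ℚ) / (q * L)| ≤ 1 := by
    have h2' : (c : ℚ) = (⌊(b - v : ℚ) / (((q * L : ℕ) : ℤ) : ℚ)⌋ : ℚ) - (⌊(a - v : ℚ) / (((q * L : ℕ) : ℤ) : ℚ)⌋ : ℚ) := by
      exact_mod_cast h2
    have f1 := Int.floor_le ((b - v : ℚ) / (((q * L : ℕ) : ℤ) : ℚ))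
    have f2 := Int.lt_floor_add_one ((b - v : ℚ) / (((q * L : ℕ) : ℤ) : ℚ))
    have f3 := Int.floor_le ((a - v : ℚ) / (((q * L : ℕ) : ℤ) : ℚ))
    have f4 := Int.lt_floor_add_one ((a - v : ℚ) / (((q * L : ℕ) : ℤ) : ℚ))
    have f5 : ((b - a : ℤ) : ℚ) / (q * L) = (b - v : ℚ) / (((q * L : ℕ) : ℤ) : ℚ) - (a - v : ℚ) / (((q * L : ℕ) : ℤ) : ℚ) := by
      rw [← sub_div]; push_cast; congr 1; ring
    rw [f5, h2', abs_le]
    constructor <;> linarith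
  exact_mod_cast h3

lemma sieve (a b : ℤ) (hab : a ≤ b) (q N : ℕ) (hq : 1 ≤ q) (hN : 1 ≤ N) (r : ℤ)
    (A : Finset ℤ) (hA : A ⊆ (Finset.Ioc a b).filter (fun n => n ≡ r [ZMOD q]))
    (hr : ∀ n ∈ A, ∀ p : ℕ, p.Prime → (p : ℤ) ∣ n → N < p) :
    (A.card : ℝ) ≤ ((b - a : ℤ) : ℝ) / q * (1 / S q N) + (N : ℝ) ^ 2 := by
  set B := (Finset.Ioc a b).filter (fun n => n ≡ r [ZMOD q]) with hB
  set lam : ℕ → ℝ := fun d => (d : ℝ) * lamd q N d with hlam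
  set g : ℤ → ℝ := fun n => ∑ d ∈ F q N, if (d : ℤ) ∣ n then lam d else 0 with hg
  have h1F : 1 ∈ F q N := by rw [mem_F]; simp [hN]
  have hgA : ∀ n ∈ A, g n = 1 := by
    intro n hn
    rw [hg]
    simp only
    rw [Finset.sum_eq_single_of_mem 1 h1F]
    · simp [hlam, lam_one hN]
    · intro d hd hd1
      rw [if_neg]
      intro hdn
      obtain ⟨p, hp, hpd⟩ := Nat.exists_prime_and_dvd hd1
      have h2 := hr n hn p hp ((Int.natCast_dvd_natCast.2 hpd).trans hdn)
      have h3 := mem_F.1 hd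
      have h4 := Nat.le_of_dvd h3.1.1 hpd
      omega
  have h1 : (A.card : ℝ) ≤ ∑ n ∈ B, g n ^ 2 := by
    calc (A.card : ℝ) = ∑ n ∈ A, g n ^ 2 := by
          rw [Finset.sum_congr rfl fun n hn => by rw [hgA n hn]]; simp
      _ ≤ _ := Finset.sum_le_sum_of_subset_of_nonneg hA (by intros; positivity)
  have h2 : ∑ n ∈ B, g n ^ 2 = ∑ d ∈ F q N, ∑ d' ∈ F q N, lam d * lam d' *
      ((B.filter (fun n => ((Nat.lcm d d' : ℕ) : ℤ) ∣ n)).card : ℝ) := by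
    have : ∀ n ∈ B, g n ^ 2 = ∑ d ∈ F q N, ∑ d' ∈ F q N, lam d * lam d' *
        (if ((Nat.lcm d d' : ℕ) : ℤ) ∣ n then 1 else 0) := by
      intro n _
      rw [hg, sq, Finset.sum_mul_sum]
      refine Finset.sum_congr rfl fun d _ => Finset.sum_congr rfl fun d' _ => ?_
      have hl : ((Nat.lcm d d' : ℕ) : ℤ) ∣ n ↔ (d : ℤ) ∣ n ∧ (d' : ℤ) ∣ n := by
        simp only [Int.natCast_dvd, Nat.lcm_dvd_iff]
      by_cases u : (d : ℤ) ∣ n <;> by_cases v : (d' : ℤ) ∣ n <;> simp [hl, u, v]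
    rw [Finset.sum_congr rfl this, Finset.sum_comm]
    refine Finset.sum_congr rfl fun d _ => ?_
    rw [Finset.sum_comm]
    refine Finset.sum_congr rfl fun d' _ => ?_
    rw [← Finset.mul_sum, Finset.sum_boole]
  set Y : ℝ := ((b - a : ℤ) : ℝ) with hY
  have h3 : ∀ d ∈ F q N, ∀ d' ∈ F q N, lam d * lam d' *
      ((B.filter (fun n => ((Nat.lcm d d' : ℕ) : ℤ) ∣ n)).card : ℝ) ≤
      Y / q * (lamd q N d * lamd q N d' * (Nat.gcd d d' : ℝ)) + 1 := by
    intro d hd d' hd'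
    have hd1 := mem_F.1 hd
    have hd1' := mem_F.1 hd'
    have hl0 : 0 < Nat.lcm d d' := Nat.lcm_pos hd1.1.1 hd1'.1.1
    have hcop : Nat.Coprime (Nat.lcm d d') q :=
      (Nat.Coprime.mul_left hd1.2.2 hd1'.2.2).coprime_dvd_left (Nat.lcm_dvd_mul d d')
    have hcb := count_bound a b hab q (Nat.lcm d d') hq hl0 hcop r
    rw [← hB, ← hY] at hcb
    set c : ℝ := ((B.filter (fun n => ((Nat.lcm d d' : ℕ) : ℤ) ∣ n)).card : ℝ) with hcdef
    have e1 : Y / q * (lamd q N d * lamd q N d' * (Nat.gcd d d' : ℝ)) =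
        lam d * lam d' * (Y / (q * (Nat.lcm d d' : ℕ))) := by
      have hgl : (Nat.gcd d d' : ℝ) * (Nat.lcm d d' : ℕ) = d * d' := by
        exact_mod_cast Nat.gcd_mul_lcm d d'
      have hlR : ((Nat.lcm d d' : ℕ) : ℝ) ≠ 0 := by positivity
      have hqR : (q : ℝ) ≠ 0 := by positivity
      simp only [hlam]
      field_simp
      linear_combination Y * lamd q N d * lamd q N d' * hgl
    have e2 : lam d * lam d' * (c - Y / (q * (Nat.lcm d d' : ℕ))) ≤ 1 := by
      refine (le_abs_self _).trans ?_
      rw [abs_mul, abs_mul]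
      have u1 := lam_abs hN hd
      have u2 := lam_abs hN hd'
      calc _ ≤ (1 : ℝ) * 1 * 1 := by gcongr
        _ = 1 := by norm_num
    rw [e1]
    linarith
  have hFc : ((F q N).card : ℝ) ≤ N := by
    have : (F q N).card ≤ (Finset.Icc 1 N).card := Finset.card_filter_le _ _
    simp at this
    exact_mod_cast this
  calc (A.card : ℝ) ≤ _ := h1
    _ = _ := h2
    _ ≤ ∑ d ∈ F q N, ∑ d' ∈ F q N, (Y / q * (lamd q N d * lamd q N d' * (Nat.gcd d d' : ℝ)) + 1) :=
      Finset.sum_le_sum fun d hd => Finset.sum_le_sum (h3 d hd)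
    _ = Y / q * (1 / S q N) + ((F q N).card : ℝ) ^ 2 := by
      simp_rw [Finset.sum_add_distrib, ← Finset.mul_sum]
      rw [main_form hN]
      simp [sq]
    _ ≤ _ := by gcongr

end BTR

theorem brun_titchmarsh_rough_numbers :
    ∃ C : ℝ, 0 < C ∧ ∀ (x y z : ℝ) (q : ℕ) (r : ℤ),
      1 ≤ x → 1 ≤ y → y ≤ x → 2 ≤ z → 1 ≤ q → Int.gcd r (q : ℤ) = 1 →
      (({n : ℕ | x < (n : ℝ) ∧ (n : ℝ) ≤ x + y ∧
          (n : ℤ) ≡ r [ZMOD (q : ℤ)] ∧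
          ∀ p : ℕ, p.Prime → p ∣ n → z < (p : ℝ)}.ncard : ℝ))
        ≤ C * (y / ((Nat.totient q : ℝ) * Real.log z) + z ^ 2) := by
  refine ⟨2, by norm_num, ?_⟩
  intro x y z q r hx hy _ hz hq _
  set T := {n : ℕ | x < (n : ℝ) ∧ (n : ℝ) ≤ x + y ∧
          (n : ℤ) ≡ r [ZMOD (q : ℤ)] ∧
          ∀ p : ℕ, p.Prime → p ∣ n → z < (p : ℝ)} with hT
  have hfin : T.Finite := by
    refine (Set.finite_Iic ⌊x + y⌋₊).subset ?_
    intro n hn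
    exact Nat.le_floor hn.2.1
  have hN : 1 ≤ ⌊z⌋₊ := Nat.le_floor (by push_cast; linarith)
  have hs := BTR.sieve ⌊x⌋ ⌊x + y⌋ (Int.floor_le_floor (by linarith)) q ⌊z⌋₊ hq hN r
    (hfin.toFinset.map Nat.castEmbedding) (by
      intro n hn
      rw [Finset.mem_map] at hn
      obtain ⟨m, hm, rfl⟩ := hn
      rw [Set.Finite.mem_toFinset] at hm
      rw [Finset.mem_filter, Finset.mem_Ioc]
      refine ⟨⟨?_, ?_⟩, hm.2.2.1⟩
      · rw [Int.floor_lt]; simpa using hm.1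
      · rw [Int.le_floor]; simpa using hm.2.1) (by
      intro n hn p hp hpn
      rw [Finset.mem_map] at hn
      obtain ⟨m, hm, rfl⟩ := hn
      rw [Set.Finite.mem_toFinset] at hm
      have := hm.2.2.2 p hp (Int.natCast_dvd_natCast.1 hpn)
      rwa [Nat.floor_lt (by linarith)])
  rw [Finset.card_map, ← Set.ncard_eq_toFinset_card T hfin] at hs
  have hlog : 0 < Real.log z := Real.log_pos (by linarith)
  have hS := BTR.S_pos (q := q) hN
  have hl := BTR.log_le_S q hq z hz
  have hφ : (0 : ℝ) < Nat.totient q := by exact_mod_cast Nat.totient_pos.2 hq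
  have hqR : (0 : ℝ) < q := by exact_mod_cast hq
  have hY : ((⌊x + y⌋ - ⌊x⌋ : ℤ) : ℝ) ≤ 2 * y := by
    push_cast
    have h1 := Int.floor_le (x + y)
    have h2 := Int.lt_floor_add_one x
    linarith
  have h1 : 1 / ((q : ℝ) * BTR.S q ⌊z⌋₊) ≤ 1 / ((Nat.totient q : ℝ) * Real.log z) := by
    refine one_div_le_one_div_of_le (by positivity) ?_
    rw [div_mul_eq_mul_div, le_div_iff₀ hφ] at hl
    linarith
  have hz2 : (⌊z⌋₊ : ℝ) ^ 2 ≤ z ^ 2 := by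
    have := Nat.floor_le (show 0 ≤ z by linarith)
    gcongr
  calc (T.ncard : ℝ) ≤ _ := hs
    _ = ((⌊x + y⌋ - ⌊x⌋ : ℤ) : ℝ) * (1 / ((q : ℝ) * BTR.S q ⌊z⌋₊)) + (⌊z⌋₊ : ℝ) ^ 2 := by
      field_simp
    _ ≤ (2 * y) * (1 / ((Nat.totient q : ℝ) * Real.log z)) + z ^ 2 := by gcongr
    _ ≤ _ := by
      rw [mul_one_div, mul_add, ← mul_div_assoc]
      have : 0 ≤ z ^ 2 := by positivity
      linarith
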